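/- Let Λ be an artin algebra and a an idempotent of Λ such that ⟨a⟩ = ΛaΛ is a stratifying ideal. If gldim(Λ/⟨a⟩) < ∞ and pd_Λ ⟨a⟩ < ∞, then pd_Λ((Λ/⟨a⟩)/rad(Λ/⟨a⟩)) < ∞ and pd_{aΛa}(aΛ) < ∞. -/

import Mathlib

/-!
Write `B = Λ/⟨a⟩`.

For the first claim, `0 → ⟨a⟩ → Λ → B → 0` shows that `pd_Λ B` is finite, hence so is the projective
dimension over `Λ` of every free `B`-module.  A simple `Λ`-module annihilated by `a` is a
`B`-module, so it has a `B`-free resolution whose length is bounded by `gldim B`, and dimension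
shifting along it bounds its projective dimension over `Λ` (`hasPDLT_restrictScalars`).

For the second claim, call a `Λ`-module `M` orthogonal if `Ext^j_Λ(M, Y) = 0` for all `j ≥ 0` and all
`Y` with `aY = 0`.  The ideal `⟨a⟩` is orthogonal: in degree `0` because `⟨a⟩ = Λa⟨a⟩`, and in degree
`j ≥ 1` because `Ext^j_Λ(⟨a⟩, Y) ≅ Ext^{j+1}_Λ(B, Y) ≅ Ext^{j+1}_B(B, Y) = 0`.  An orthogonal `M` has
no nonzero map to `M/ΛaM`, so it is a quotient of a direct sum of copies of `Λa`; such a sum is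
projective and orthogonal, and therefore the kernel is orthogonal as well.  The exact functor
`M ↦ aM` sends `Λa` to the free module `aΛa`, so induction on `pd_Λ M` gives
`pd_{aΛa}(aM) ≤ pd_Λ M` for orthogonal `M` (`ExtOrthogonal.hasPDLT_cornerMod`).  Taking `M = ⟨a⟩`
and using `a⟨a⟩ = aΛ` finishes the proof.
-/

/-!
STATEMENT 19: Let `Λ` be an artin algebra and `a` an idempotent of `Λ` such that
`⟨a⟩ = ΛaΛ` is a stratifying ideal.  If `gldim(Λ/⟨a⟩) < ∞` and `pd_Λ ⟨a⟩ < ∞`, then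
`pd_Λ((Λ/⟨a⟩)/rad(Λ/⟨a⟩)) < ∞` and `pd_{aΛa}(aΛ) < ∞`.

The quotient ring `Λ/⟨a⟩` is realised as the quotient by the ring congruence of the
two-sided ideal generated by `a`.  The stratifying condition is encoded by its
characteristic homological property (the key consequence used in the proof, which for an
idempotent ideal is equivalent to it): the restriction functor
`mod Λ/⟨a⟩ → mod Λ` induces isomorphisms `Ext^j_{Λ/⟨a⟩}(X, Y) ≅ Ext^j_Λ(X, Y)` for all
`X`, `Y` and all `j ≥ 0`.  `(Λ/⟨a⟩)/rad(Λ/⟨a⟩)` is the direct sum of the simple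
`Λ`-modules annihilated by `⟨a⟩`, so finiteness of its projective dimension is a uniform
bound on the projective dimensions of such simples.  The corner ring `aΛa` is
`{x : Λ // a * x * a = x}` with identity `a`, and `aΛ = {x : Λ // a • x = x}`.
`pd X ≤ n` is expressed by vanishing of `Ext^i(X,-)` for `i > n`.
-/

universe u

section CornerRing

variable {Λ : Type u} [Ring Λ]

lemma corner_left {a : Λ} (ha : IsIdempotentElem a) {x : Λ}
    (hx : a * x * a = x) : a * x = x := by
  conv_lhs => rw [← hx]
  rw [← mul_assoc, ← mul_assoc, ha.eq, hx]

lemma corner_right {a : Λ} (ha : IsIdempotentElem a) {x : Λ}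
    (hx : a * x * a = x) : x * a = x := by
  conv_lhs => rw [← hx]
  rw [mul_assoc, ha.eq, hx]

variable (a : Λ) [Fact (IsIdempotentElem a)]

/-- The corner (non-unital) subring `aΛa` of `Λ` determined by an idempotent `a`. -/
def cornerSubring : NonUnitalSubring Λ where
  carrier := {x | a * x * a = x}
  zero_mem' := by simp
  add_mem' {x y} hx hy := by
    simp only [Set.mem_setOf_eq] at *
    rw [mul_add, add_mul, hx, hy]
  neg_mem' {x} hx := by
    simp only [Set.mem_setOf_eq] at *
    rw [mul_neg, neg_mul, hx]
  mul_mem' {x y} hx hy := by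
    simp only [Set.mem_setOf_eq] at *
    have hx' := corner_left (Fact.out : IsIdempotentElem a) hx
    have hy' := corner_right (Fact.out : IsIdempotentElem a) hy
    rw [← mul_assoc a x y, hx', mul_assoc x y a, hy']

/-- The corner ring `aΛa` (unital, with identity `a`). -/
def Corner : Type u := cornerSubring a

instance : NonUnitalRing (Corner a) :=
  inferInstanceAs (NonUnitalRing (cornerSubring a))

noncomputable instance : Ring (Corner a) :=
  { (inferInstance : NonUnitalRing (Corner a)) with
    one := ⟨a, by
      show a * a * a = a
      rw [(Fact.out : IsIdempotentElem a).eq, (Fact.out : IsIdempotentElem a).eq]⟩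
    one_mul := fun x => Subtype.ext (corner_left Fact.out x.2)
    mul_one := fun x => Subtype.ext (corner_right Fact.out x.2) }

variable (M : Type u) [AddCommGroup M] [Module Λ M]

/-- The additive subgroup `aM` of a `Λ`-module `M`. -/
def cornerModSub : AddSubgroup M where
  carrier := {m | a • m = m}
  zero_mem' := by simp
  add_mem' {x y} hx hy := by
    simp only [Set.mem_setOf_eq, smul_add] at *
    rw [hx, hy]
  neg_mem' {x} hx := by
    simp only [Set.mem_setOf_eq, smul_neg] at *
    rw [hx]

/-- `aM`, the corner module of `M`, as a module over the corner ring `aΛa`. -/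
def CornerMod : Type u := cornerModSub a M

instance : AddCommGroup (CornerMod a M) :=
  inferInstanceAs (AddCommGroup (cornerModSub a M))

instance : Module (Corner a) (CornerMod a M) where
  smul r m := ⟨r.1 • m.1, by
    show a • (r.1 • m.1) = r.1 • m.1
    rw [← mul_smul, corner_left Fact.out r.2]⟩
  one_smul m := Subtype.ext m.2
  mul_smul r s m := Subtype.ext (mul_smul r.1 s.1 m.1)
  smul_zero r := Subtype.ext (smul_zero r.1)
  smul_add r m n := Subtype.ext (smul_add r.1 m.1 n.1)
  add_smul r s m := Subtype.ext (add_smul r.1 s.1 m.1)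
  zero_smul m := Subtype.ext (zero_smul Λ m.1)

instance : Fact (IsIdempotentElem (MulOpposite.op a)) :=
  ⟨congrArg MulOpposite.op (Fact.out : IsIdempotentElem a).eq⟩

end CornerRing


open CategoryTheory

universe w w1 w2

/-- `X` has projective dimension at most `n`: `Ext^i(X, -) = 0` for `i > n`. -/
def pdLE {R : Type u} [Ring R] [HasExt.{w} (ModuleCat.{u} R)]
    (X : ModuleCat.{u} R) (n : ℕ) : Prop :=
  ∀ (i : ℕ), n < i → ∀ (Y : ModuleCat.{u} R), Subsingleton (Abelian.Ext X Y i)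

open CategoryTheory Abelian

/-! ### Projective dimension -/

section Dimension

variable {R : Type u} [Ring R]

lemma hasPDLT_of_pdLE [HasExt.{w} (ModuleCat.{u} R)] {X : ModuleCat.{u} R} {n : ℕ}
    (h : pdLE.{u, w} X n) : HasProjectiveDimensionLT X (n + 1) :=
  HasProjectiveDimensionLT.mk fun i hi Y e => by
    have := h i hi Y
    exact Subsingleton.elim _ _

lemma pdLE_of_hasPDLT [HasExt.{w} (ModuleCat.{u} R)] {X : ModuleCat.{u} R} {n : ℕ}
    (h : HasProjectiveDimensionLT X (n + 1)) : pdLE.{u, w} X n :=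
  fun i hi Y => HasProjectiveDimensionLT.subsingleton X (n + 1) i hi Y

lemma shortExact_of {K P M : Type u} [AddCommGroup K] [AddCommGroup P] [AddCommGroup M]
    [Module R K] [Module R P] [Module R M] (f : K →ₗ[R] P) (g : P →ₗ[R] M)
    (hf : Function.Injective f) (hfg : Function.Exact f g) (hg : Function.Surjective g) :
    (ModuleCat.shortComplexOfCompEqZero f g hfg.linearMap_comp_eq_zero).ShortExact :=
  ModuleCat.shortComplex_shortExact _ hfg hf hg

lemma exact_ker_subtype {P M : Type u} [AddCommGroup P] [AddCommGroup M]
    [Module R P] [Module R M] (g : P →ₗ[R] M) :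
    Function.Exact (LinearMap.ker g).subtype g := fun _ => by simp

lemma projective_finsupp (M ι : Type u) [AddCommGroup M] [Module R M] [Module.Projective R M] :
    Module.Projective R (ι →₀ M) := by
  classical
  exact Module.Projective.of_equiv (finsuppLequivDFinsupp R (ι := ι) (M := M)).symm

lemma exists_projective_cover (M : Type u) [AddCommGroup M] [Module R M] :
    ∃ (P : Type u) (_ : AddCommGroup P) (_ : Module R P) (g : P →ₗ[R] M),
      Module.Projective R P ∧ Function.Surjective g :=
  ⟨M →₀ R, inferInstance, inferInstance, Finsupp.linearCombination R id, inferInstance,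
    Finsupp.linearCombination_id_surjective R M⟩

/-- Any direct sum of copies of `M` has projective dimension at most that of `M`. -/
lemma hasPDLT_finsupp (n : ℕ) : ∀ (M : Type u) [AddCommGroup M] [Module R M] (ι : Type u),
    HasProjectiveDimensionLT (ModuleCat.of R M) (n + 1) →
    HasProjectiveDimensionLT (ModuleCat.of R (ι →₀ M)) (n + 1) := by
  induction n with
  | zero =>
    intro M _ _ ι h
    have : Projective (ModuleCat.of R M) := projective_iff_hasProjectiveDimensionLT_one.2 h
    have : Module.Projective R M := (IsProjective.iff_projective M).2 this
    have := (IsProjective.iff_projective (R := R) (ι →₀ M)).1 (projective_finsupp M ι)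
    exact projective_iff_hasProjectiveDimensionLT_one.1 this
  | succ n ih =>
    intro M _ _ ι h
    obtain ⟨P, _, _, g, hP₀, hg⟩ := exists_projective_cover (R := R) M
    have S := shortExact_of _ g (Submodule.injective_subtype _) (exact_ker_subtype g) hg
    have hP : Projective (ModuleCat.of R P) := (IsProjective.iff_projective _).1 hP₀
    have hK := ih (LinearMap.ker g) ι ((S.hasProjectiveDimensionLT_X₃_iff n hP).1 h)
    have hP' : Projective (ModuleCat.of R (ι →₀ P)) :=
      (IsProjective.iff_projective _).1 (projective_finsupp _ _)
    let f' : (ι →₀ LinearMap.ker g) →ₗ[R] (ι →₀ P) :=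
      Finsupp.mapRange.linearMap (LinearMap.ker g).subtype
    let g' : (ι →₀ P) →ₗ[R] (ι →₀ M) := Finsupp.mapRange.linearMap g
    have hf' : Function.Injective f' :=
      Finsupp.mapRange_injective _ (map_zero _) (Submodule.injective_subtype _)
    have hg' : Function.Surjective g' := Finsupp.mapRange_surjective _ (map_zero _) hg
    have hfg' : Function.Exact f' g' := by
      intro x
      constructor
      · intro hx
        have hx' : ∀ i, x i ∈ LinearMap.ker g := fun i => DFunLike.congr_fun hx i
        refine ⟨Finsupp.onFinset x.support (fun i => ⟨x i, hx' i⟩) (fun i hi => ?_), ?_⟩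
        · rw [Finsupp.mem_support_iff]
          exact fun h0 => hi (Subtype.ext h0)
        · exact Finsupp.ext fun i => rfl
      · rintro ⟨y, rfl⟩
        exact Finsupp.ext fun i => (y i).2
    have S' := shortExact_of f' g' hf' hfg' hg'
    exact (S'.hasProjectiveDimensionLT_X₃_iff n hP').2 hK

lemma shortExact_restrictScalars {A B : Type u} [Ring A] [Ring B] (φ : A →+* B)
    {S : ShortComplex (ModuleCat.{u} B)} (hS : S.ShortExact) :
    (S.map (ModuleCat.restrictScalars φ)).ShortExact :=
  ModuleCat.shortComplex_shortExact _
    ((ShortComplex.ShortExact.moduleCat_exact_iff_function_exact S).1 hS.exact)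
    hS.moduleCat_injective_f hS.moduleCat_surjective_g

/-- Change of rings: if `B` has projective dimension less than `k + 1` over `A`, restriction
along `A → B` raises projective dimensions by at most `k`. -/
lemma hasPDLT_restrictScalars {A B : Type u} [Ring A] [Ring B] (φ : A →+* B) (k : ℕ)
    (hB : HasProjectiveDimensionLT ((ModuleCat.restrictScalars φ).obj (ModuleCat.of B B)) (k + 1))
    (m : ℕ) : ∀ X : ModuleCat.{u} B, HasProjectiveDimensionLT X (m + 1) →
      HasProjectiveDimensionLT ((ModuleCat.restrictScalars φ).obj X) (m + k + 1) := by
  have free (ι : Type u) : HasProjectiveDimensionLT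
      ((ModuleCat.restrictScalars φ).obj (ModuleCat.of B (ι →₀ B))) (k + 1) := by
    have := hasPDLT_finsupp k ((ModuleCat.restrictScalars φ).obj (ModuleCat.of B B)) ι hB
    let e : (ι →₀ ((ModuleCat.restrictScalars φ).obj (ModuleCat.of B B))) ≃ₗ[A]
        ((ModuleCat.restrictScalars φ).obj (ModuleCat.of B (ι →₀ B))) :=
      { toFun := fun x => x
        invFun := fun x => x
        map_add' := fun _ _ => rfl
        map_smul' := fun _ _ => by
          refine Finsupp.ext fun i => rfl
        left_inv := fun _ => rfl
        right_inv := fun _ => rfl }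
    exact @hasProjectiveDimensionLT_of_iso _ _ _ _ _ e.toModuleIso (k + 1) this
  induction m with
  | zero =>
    intro X hX
    have : Projective X := projective_iff_hasProjectiveDimensionLT_one.2 hX
    let g : ModuleCat.of B (X →₀ B) ⟶ X := ModuleCat.ofHom (Finsupp.linearCombination B id)
    have : Epi g := (ModuleCat.epi_iff_surjective _).2
      (Finsupp.linearCombination_id_surjective B X)
    let r : Retract X (ModuleCat.of B (X →₀ B)) :=
      ⟨Projective.factorThru (𝟙 X) g, g, Projective.factorThru_comp _ _⟩
    have := free X
    rw [Nat.zero_add]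
    exact (r.map (ModuleCat.restrictScalars φ)).hasProjectiveDimensionLT _
  | succ m ih =>
    intro X hX
    let g : (X →₀ B) →ₗ[B] X := Finsupp.linearCombination B id
    have hg : Function.Surjective g := Finsupp.linearCombination_id_surjective B X
    have S := shortExact_of _ g (Submodule.injective_subtype _) (exact_ker_subtype g) hg
    have hP : Projective (ModuleCat.of B (X →₀ B)) :=
      (IsProjective.iff_projective _).1 inferInstance
    have hK := ih _ ((S.hasProjectiveDimensionLT_X₃_iff m hP).1 hX)
    have S' := shortExact_restrictScalars φ S
    have := free X
    have h2 := hasProjectiveDimensionLT_of_ge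
      ((ModuleCat.restrictScalars φ).obj (ModuleCat.of B (X →₀ B))) (k + 1) (m + k + 1 + 1)
      (by lia)
    have := S'.hasProjectiveDimensionLT_X₃ (m + k + 1) hK h2
    rw [show m + 1 + k + 1 = m + k + 1 + 1 by lia]
    exact this

end Dimension

/-! ### Orthogonal modules and the functor `M ↦ aM` -/

section Corner

variable {Λ : Type u} [Ring Λ] (a : Λ)

/-- The submodule `ΛaM` of `M`.  For `a` idempotent `aM = {m | a • m = m}`, and this set is taken
as generating set. -/
def cornerTrace (M : Type u) [AddCommGroup M] [Module Λ M] : Submodule Λ M :=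
  Submodule.span Λ {m | a • m = m}

/-- `M` is left orthogonal, in all degrees, to the modules annihilated by `a`. -/
def ExtOrthogonal [HasExt.{w} (ModuleCat.{u} Λ)] (M : Type u) [AddCommGroup M] [Module Λ M] :
    Prop :=
  ∀ (Y : ModuleCat.{u} Λ), (∀ y : Y, a • y = 0) → ∀ (j : ℕ)
    (e : Ext (ModuleCat.of Λ M) Y j), e = 0

variable {a}

lemma linearMap_eq_zero_of_cornerTrace_eq_top {M Y : Type u} [AddCommGroup M] [Module Λ M]
    [AddCommGroup Y] [Module Λ Y] (hM : cornerTrace a M = ⊤) (hY : ∀ y : Y, a • y = 0)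
    (f : M →ₗ[Λ] Y) : f = 0 := by
  refine LinearMap.ext_on (s := {m | a • m = m}) hM fun m hm => ?_
  have hm' : a • m = m := hm
  rw [← hm', map_smul, hY]
  rfl

lemma ext_zero_eq_zero [HasExt.{w} (ModuleCat.{u} Λ)] {M : Type u} [AddCommGroup M] [Module Λ M]
    (hM : cornerTrace a M = ⊤) (Y : ModuleCat.{u} Λ) (hY : ∀ y : Y, a • y = 0)
    (e : Ext (ModuleCat.of Λ M) Y 0) : e = 0 := by
  apply Ext.homEquiv₀.injective
  have h (f : ModuleCat.of Λ M ⟶ Y) : f = 0 :=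
    ModuleCat.hom_ext (linearMap_eq_zero_of_cornerTrace_eq_top hM hY f.hom)
  rw [h (Ext.homEquiv₀ e), h (Ext.homEquiv₀ 0)]

lemma ExtOrthogonal.of_projective [HasExt.{w} (ModuleCat.{u} Λ)] {P : Type u} [AddCommGroup P]
    [Module Λ P] [Module.Projective Λ P] (hP : cornerTrace a P = ⊤) :
    ExtOrthogonal.{u, w} a P := by
  intro Y hY j e
  have : Projective (ModuleCat.of Λ P) := (IsProjective.iff_projective _).1 inferInstance
  cases j with
  | zero => exact ext_zero_eq_zero hP Y hY e
  | succ j => exact e.eq_zero_of_projective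

/-- Orthogonality in degree zero against `M / ΛaM` forces `M = ΛaM`. -/
lemma ExtOrthogonal.cornerTrace_eq_top [HasExt.{w} (ModuleCat.{u} Λ)]
    (ha : IsIdempotentElem a) {M : Type u}
    [AddCommGroup M] [Module Λ M] (hM : ExtOrthogonal.{u, w} a M) : cornerTrace a M = ⊤ := by
  have hY : ∀ y : ModuleCat.of Λ (M ⧸ cornerTrace a M), a • y = 0 := by
    intro y
    obtain ⟨m, rfl⟩ := Submodule.mkQ_surjective _ y
    rw [← map_smul]
    refine (Submodule.Quotient.mk_eq_zero _).2 (Submodule.subset_span ?_)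
    show a • a • m = a • m
    rw [← mul_smul, ha.eq]
  have h := hM _ hY 0 (Ext.mk₀ (ModuleCat.ofHom (cornerTrace a M).mkQ))
  rw [Ext.mk₀_eq_zero_iff] at h
  have h' : (cornerTrace a M).mkQ = 0 := congrArg ModuleCat.Hom.hom h
  rw [← Submodule.ker_mkQ (cornerTrace a M), h', LinearMap.ker_zero]

lemma ExtOrthogonal.of_shortExact [HasExt.{w} (ModuleCat.{u} Λ)] {K P M : Type u} [AddCommGroup K]
    [AddCommGroup P] [AddCommGroup M] [Module Λ K] [Module Λ P] [Module Λ M]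
    (f : K →ₗ[Λ] P) (g : P →ₗ[Λ] M)
    (hf : Function.Injective f) (hfg : Function.Exact f g) (hg : Function.Surjective g)
    (hP : ExtOrthogonal.{u, w} a P) (hM : ExtOrthogonal.{u, w} a M) :
    ExtOrthogonal.{u, w} a K := by
  intro Y hY j e
  have S := shortExact_of f g hf hfg hg
  obtain ⟨x, hx⟩ := Ext.contravariant_sequence_exact₁ S Y e (add_comm 1 j) (hM Y hY _ _)
  rw [← hx, hP Y hY j x, Ext.comp_zero]

variable (a) [Fact (IsIdempotentElem a)]

/-- The map `aM → aN` induced by a `Λ`-linear map `M → N`. -/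
def cornerMap {M N : Type u} [AddCommGroup M] [Module Λ M] [AddCommGroup N] [Module Λ N]
    (f : M →ₗ[Λ] N) : CornerMod a M →ₗ[Corner a] CornerMod a N where
  toFun m := ⟨f m.1, by
    show a • f m.1 = f m.1
    rw [← map_smul]
    exact congrArg f m.2⟩
  map_add' m n := Subtype.ext (map_add f m.1 n.1)
  map_smul' r m := Subtype.ext (map_smul f r.1 m.1)

variable {a} in
lemma cornerMap_injective {M N : Type u} [AddCommGroup M] [Module Λ M] [AddCommGroup N]
    [Module Λ N] {f : M →ₗ[Λ] N} (hf : Function.Injective f) :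
    Function.Injective (cornerMap a f) :=
  fun _ _ h => Subtype.ext (hf (congrArg Subtype.val h))

lemma smul_mem_corner {M : Type u} [AddCommGroup M] [Module Λ M] (m : M) :
    a • a • m = a • m := by
  rw [← mul_smul, (Fact.out : IsIdempotentElem a).eq]

variable {a} in
lemma cornerMap_surjective {M N : Type u} [AddCommGroup M] [Module Λ M] [AddCommGroup N]
    [Module Λ N] {f : M →ₗ[Λ] N} (hf : Function.Surjective f) :
    Function.Surjective (cornerMap a f) := by
  intro n
  obtain ⟨m, hm⟩ := hf n.1
  refine ⟨⟨a • m, smul_mem_corner a m⟩, Subtype.ext ?_⟩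
  show f (a • m) = n.1
  rw [map_smul, hm]
  exact n.2

variable {a} in
lemma cornerMap_exact {K M N : Type u} [AddCommGroup K] [Module Λ K] [AddCommGroup M] [Module Λ M]
    [AddCommGroup N] [Module Λ N] {f : K →ₗ[Λ] M} {g : M →ₗ[Λ] N} (h : Function.Exact f g) :
    Function.Exact (cornerMap a f) (cornerMap a g) := by
  intro m
  constructor
  · intro hm
    obtain ⟨k, hk⟩ := (h m.1).1 (congrArg Subtype.val hm)
    refine ⟨⟨a • k, smul_mem_corner a k⟩, Subtype.ext ?_⟩
    show f (a • k) = m.1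
    rw [map_smul, hk]
    exact m.2
  · rintro ⟨k, rfl⟩
    exact Subtype.ext (h.apply_apply_eq_zero k.1)

/-- The projective left ideal `Λa`. -/
def leftCorner : Submodule Λ Λ := LinearMap.range (LinearMap.toSpanSingleton Λ Λ a)

omit [Fact (IsIdempotentElem a)] in
lemma self_mem_leftCorner : a ∈ leftCorner a := ⟨1, by simp⟩

lemma mul_self_of_mem_leftCorner {x : Λ} (hx : x ∈ leftCorner a) : x * a = x := by
  obtain ⟨y, rfl⟩ := hx
  simp [mul_assoc, (Fact.out : IsIdempotentElem a).eq]

instance : Module.Projective Λ (leftCorner a) :=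
  Module.Projective.of_split (leftCorner a).subtype
    (LinearMap.toSpanSingleton Λ Λ a).rangeRestrict
    (LinearMap.ext fun x => Subtype.ext (mul_self_of_mem_leftCorner a x.2))

lemma projective_finsupp_leftCorner (ι : Type u) : Module.Projective Λ (ι →₀ leftCorner a) :=
  projective_finsupp _ _

lemma cornerTrace_finsupp_leftCorner (ι : Type u) :
    cornerTrace a (ι →₀ leftCorner a) = ⊤ := by
  rw [eq_top_iff]
  rintro p -
  induction p using Finsupp.induction_linear with
  | zero => exact zero_mem _
  | add p q hp hq => exact add_mem hp hq
  | single i y =>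
    have : Finsupp.single i y
        = y.1 • (Finsupp.single i ⟨a, self_mem_leftCorner a⟩ : ι →₀ leftCorner a) := by
      rw [Finsupp.smul_single]
      congr 1
      exact Subtype.ext (mul_self_of_mem_leftCorner a y.2).symm
    rw [this]
    refine Submodule.smul_mem _ _ (Submodule.subset_span ?_)
    show a • Finsupp.single i _ = _
    rw [Finsupp.smul_single]
    congr 1
    exact Subtype.ext (Fact.out : IsIdempotentElem a).eq

/-- `a(⨁ Λa)` is a summand of the free module `⨁ aΛa` (in fact they are isomorphic). -/
lemma projective_cornerMod_finsupp (ι : Type u) :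
    Module.Projective (Corner a) (CornerMod a (ι →₀ leftCorner a)) := by
  let f : leftCorner a → Corner a := fun y => ⟨a * y.1, by
    show a * (a * y.1) * a = a * y.1
    rw [mul_assoc, mul_assoc, mul_self_of_mem_leftCorner a y.2, ← mul_assoc,
      (Fact.out : IsIdempotentElem a).eq]⟩
  have f0 : f 0 = 0 := Subtype.ext (mul_zero a)
  let g : Corner a → leftCorner a := fun x => ⟨x.1, ⟨x.1, by
    simpa using corner_right Fact.out x.2⟩⟩
  have g0 : g 0 = 0 := rfl
  let F : CornerMod a (ι →₀ leftCorner a) →ₗ[Corner a] (ι →₀ Corner a) :=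
    { toFun := fun x => Finsupp.mapRange f f0 x.1
      map_add' := fun x y => Finsupp.ext fun i => Subtype.ext (mul_add a (x.1 i).1 (y.1 i).1)
      map_smul' := fun r x => Finsupp.ext fun i => Subtype.ext (by
        show a * (r.1 * (x.1 i).1) = r.1 * (a * (x.1 i).1)
        rw [← mul_assoc, ← mul_assoc, corner_left Fact.out r.2, corner_right Fact.out r.2]) }
  let G : (ι →₀ Corner a) →ₗ[Corner a] CornerMod a (ι →₀ leftCorner a) :=
    { toFun := fun x => ⟨Finsupp.mapRange g g0 x, Finsupp.ext fun i => Subtype.ext (by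
        show a * (x i).1 = (x i).1
        exact corner_left Fact.out (x i).2)⟩
      map_add' := fun x y => Subtype.ext (Finsupp.ext fun i => rfl)
      map_smul' := fun r x => Subtype.ext (Finsupp.ext fun i => rfl) }
  refine Module.Projective.of_split F G (LinearMap.ext fun x => Subtype.ext
    (Finsupp.ext fun i => Subtype.ext ?_))
  show a * (x.1 i).1 = (x.1 i).1
  exact congrArg Subtype.val (DFunLike.congr_fun x.2 i)

/-- The canonical map `⨁_{m ∈ aM} Λa → M`. -/
noncomputable def cornerCover (M : Type u) [AddCommGroup M] [Module Λ M] :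
    (CornerMod a M →₀ leftCorner a) →ₗ[Λ] M :=
  Finsupp.lsum ℕ fun m => (LinearMap.toSpanSingleton Λ M m.1).comp (leftCorner a).subtype

omit [Fact (IsIdempotentElem a)] in
variable {a} in
lemma cornerCover_surjective {M : Type u} [AddCommGroup M] [Module Λ M]
    (hM : cornerTrace a M = ⊤) : Function.Surjective (cornerCover a M) := by
  rw [← LinearMap.range_eq_top, eq_top_iff, ← hM, cornerTrace, Submodule.span_le]
  intro m hm
  refine ⟨Finsupp.single ⟨m, hm⟩ ⟨a, self_mem_leftCorner a⟩, ?_⟩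
  refine (Finsupp.lsum_single ℕ _ _ _).trans ?_
  exact hm

variable {a} in
lemma exists_corner_cover {M : Type u} [AddCommGroup M] [Module Λ M] (hM : cornerTrace a M = ⊤) :
    ∃ (P : Type u) (_ : AddCommGroup P) (_ : Module Λ P) (g : P →ₗ[Λ] M),
      Module.Projective Λ P ∧ cornerTrace a P = ⊤ ∧
      Module.Projective (Corner a) (CornerMod a P) ∧ Function.Surjective g :=
  ⟨CornerMod a M →₀ leftCorner a, inferInstance, inferInstance, cornerCover a M,
    projective_finsupp_leftCorner a _, cornerTrace_finsupp_leftCorner a _,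
    projective_cornerMod_finsupp a _, cornerCover_surjective hM⟩

/-- A module `M` orthogonal to the modules annihilated by `a` is resolved by sums of copies of
`Λa`, at each stage of which the syzygy is again orthogonal; applying `M ↦ aM` turns such a
resolution into a projective resolution over `aΛa`. -/
lemma ExtOrthogonal.hasPDLT_cornerMod [HasExt.{w} (ModuleCat.{u} Λ)] (n : ℕ) :
    ∀ (M : Type u) [AddCommGroup M] [Module Λ M], ExtOrthogonal.{u, w} a M →
      HasProjectiveDimensionLT (ModuleCat.of Λ M) (n + 1) →
      HasProjectiveDimensionLT (ModuleCat.of (Corner a) (CornerMod a M)) (n + 1) := by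
  induction n with
  | zero =>
    intro M _ _ hM h
    have : Projective (ModuleCat.of Λ M) := projective_iff_hasProjectiveDimensionLT_one.2 h
    have : Module.Projective Λ M := (IsProjective.iff_projective M).2 this
    obtain ⟨P, _, _, g, -, -, hcP, hg⟩ := exists_corner_cover (hM.cornerTrace_eq_top Fact.out)
    obtain ⟨s, hs⟩ := Module.projective_lifting_property g LinearMap.id hg
    have : Module.Projective (Corner a) (CornerMod a M) :=
      Module.Projective.of_split (cornerMap a s) (cornerMap a g)
        (LinearMap.ext fun m => Subtype.ext (LinearMap.congr_fun hs m.1))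
    exact projective_iff_hasProjectiveDimensionLT_one.1 ((IsProjective.iff_projective _).1 this)
  | succ n ih =>
    intro M _ _ hM h
    obtain ⟨P, _, _, g, hP₀, htr, hcP, hg⟩ :=
      exists_corner_cover (hM.cornerTrace_eq_top Fact.out)
    have hf := Submodule.injective_subtype (LinearMap.ker g)
    have hfg := exact_ker_subtype g
    have hP : Projective (ModuleCat.of Λ P) := (IsProjective.iff_projective _).1 hP₀
    have hK := ih (LinearMap.ker g)
      (ExtOrthogonal.of_shortExact _ _ hf hfg hg (.of_projective htr) hM)
      (((shortExact_of _ _ hf hfg hg).hasProjectiveDimensionLT_X₃_iff n hP).1 h)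
    exact ((shortExact_of _ _ (cornerMap_injective hf) (cornerMap_exact hfg)
      (cornerMap_surjective hg)).hasProjectiveDimensionLT_X₃_iff n
        ((IsProjective.iff_projective _).1 hcP)).2 hK

end Corner

/-! ### The ideal `⟨a⟩` and the quotient `Λ/⟨a⟩` -/

section Quotient

variable {Λ : Type u} [Ring Λ] (a : Λ)

/-- The ideal `⟨a⟩` as a two-sided ideal. -/
abbrev idealOf : TwoSidedIdeal Λ := TwoSidedIdeal.span {a}

/-- The projection `Λ → Λ/⟨a⟩`. -/
abbrev proj : Λ →+* (idealOf a).ringCon.Quotient := RingCon.mk' (idealOf a).ringCon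

lemma proj_eq_zero_iff (x : Λ) : proj a x = 0 ↔ x ∈ (idealOf a).asIdeal := by
  rw [TwoSidedIdeal.mem_asIdeal, TwoSidedIdeal.mem_iff]
  exact (RingCon.eq _)

lemma self_mem_idealOf : a ∈ idealOf a := TwoSidedIdeal.subset_span rfl

/-- A `Λ`-module annihilated by `a` is, up to isomorphism, restricted from `Λ/⟨a⟩`. -/
lemma exists_iso_restrictScalars (Y : ModuleCat.{u} Λ) (hY : ∀ y : Y, a • y = 0) :
    ∃ X : ModuleCat.{u} (idealOf a).ringCon.Quotient,
      Nonempty ((ModuleCat.restrictScalars (proj a)).obj X ≅ Y) := by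
  have hle : (idealOf a).ringCon ≤ RingCon.ker (Module.toAddMonoidEnd Λ Y) := by
    have h : idealOf a ≤ TwoSidedIdeal.ker (Module.toAddMonoidEnd Λ Y) := by
      rw [TwoSidedIdeal.span_le]
      rintro _ rfl
      exact (TwoSidedIdeal.mem_ker _).2 (AddMonoidHom.ext hY)
    intro x y hxy
    exact TwoSidedIdeal.ringCon_le_iff.1 h hxy
  let _ : Module (idealOf a).ringCon.Quotient Y :=
    Module.compHom Y ((idealOf a).ringCon.lift (Module.toAddMonoidEnd Λ Y) hle)
  let X := ModuleCat.of (idealOf a).ringCon.Quotient Y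
  let e : ((ModuleCat.restrictScalars (proj a)).obj X) ≃ₗ[Λ] Y :=
      { toFun := fun x => x
        invFun := fun x => x
        map_add' := fun _ _ => rfl
        map_smul' := fun _ _ => rfl
        left_inv := fun _ => rfl
        right_inv := fun _ => rfl }
  exact ⟨X, ⟨e.toModuleIso⟩⟩

/-- The projection `Λ → Λ/⟨a⟩` as a `Λ`-linear map. -/
def projLinear : Λ →ₗ[Λ]
    (ModuleCat.restrictScalars (proj a)).obj (ModuleCat.of _ (idealOf a).ringCon.Quotient) where
  toFun x := proj a x
  map_add' x y := map_add (proj a) x y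
  map_smul' x y := map_mul (proj a) x y

lemma shortExact_idealOf : (ModuleCat.shortComplexOfCompEqZero (idealOf a).asIdeal.subtype
    (projLinear a) (LinearMap.ext fun x => (proj_eq_zero_iff a x.1).2 x.2)).ShortExact :=
  shortExact_of _ _ (Submodule.injective_subtype _)
    (fun x => by
      refine (proj_eq_zero_iff a x).trans ?_
      simp)
    (RingCon.mk'_surjective _)

lemma cornerTrace_idealOf [Fact (IsIdempotentElem a)] :
    cornerTrace a (idealOf a).asIdeal = ⊤ := by
  have key : ∀ x ∈ (idealOf a).asIdeal,
      x ∈ (cornerTrace a (idealOf a).asIdeal).map (idealOf a).asIdeal.subtype := by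
    intro x hx
    rw [TwoSidedIdeal.mem_asIdeal, TwoSidedIdeal.mem_span_iff_mem_addSubgroup_closure] at hx
    induction hx using AddSubgroup.closure_induction with
    | mem x hx =>
      obtain ⟨_, ⟨y, -, b, hb, rfl⟩, z, -, rfl⟩ := hx
      have hb : b = a := hb
      subst b
      have hz : a * z ∈ (idealOf a).asIdeal :=
        (idealOf a).mul_mem_right _ _ (self_mem_idealOf a)
      refine ⟨y • ⟨a * z, hz⟩, Submodule.smul_mem _ _ (Submodule.subset_span ?_),
        (mul_assoc y a z).symm⟩
      exact Subtype.ext (smul_mem_corner a z)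
    | zero => exact zero_mem _
    | add x y _ _ hx hy => exact add_mem hx hy
    | neg x _ hx => exact neg_mem hx
  rw [eq_top_iff]
  rintro ⟨x, hx⟩ -
  obtain ⟨y, hy, hyx⟩ := key x hx
  rwa [show (⟨x, hx⟩ : (idealOf a).asIdeal) = y from Subtype.ext hyx.symm]

/-- `a⟨a⟩ = aΛ`. -/
noncomputable def cornerModIdealEquiv [Fact (IsIdempotentElem a)] :
    CornerMod a (idealOf a).asIdeal ≃ₗ[Corner a] CornerMod a Λ :=
  LinearEquiv.ofBijective (cornerMap a (idealOf a).asIdeal.subtype)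
    ⟨cornerMap_injective (Submodule.injective_subtype _), fun x =>
      ⟨⟨⟨x.1, by
          have h : a * x.1 = x.1 := x.2
          rw [← h]
          exact (idealOf a).mul_mem_right _ _ (self_mem_idealOf a)⟩, Subtype.ext x.2⟩, rfl⟩⟩

end Quotient

theorem stmt_19 {R₀ : Type u} [CommRing R₀] [IsArtinianRing R₀]
    {Λ : Type u} [Ring Λ] [Algebra R₀ Λ] [Module.Finite R₀ Λ]
    (a : Λ) [Fact (IsIdempotentElem a)]
    [HasExt.{w} (ModuleCat.{u} Λ)]
    [HasExt.{w1} (ModuleCat.{u} ((TwoSidedIdeal.span {a} : TwoSidedIdeal Λ)).ringCon.Quotient)]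
    [HasExt.{w2} (ModuleCat.{u} (Corner a))]
    -- `⟨a⟩` is a stratifying ideal, encoded by the homological embedding property:
    (hstrat : ∀ (X Y : ModuleCat.{u}
        ((TwoSidedIdeal.span {a} : TwoSidedIdeal Λ)).ringCon.Quotient) (j : ℕ),
      Nonempty (Abelian.Ext X Y j ≃+
        Abelian.Ext
          ((ModuleCat.restrictScalars
            (RingCon.mk' (TwoSidedIdeal.span {a} : TwoSidedIdeal Λ).ringCon)).obj X)
          ((ModuleCat.restrictScalars
            (RingCon.mk' (TwoSidedIdeal.span {a} : TwoSidedIdeal Λ).ringCon)).obj Y) j))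
    -- `gldim (Λ/⟨a⟩) < ∞`:
    (hgl : ∃ n : ℕ, ∀ X : ModuleCat.{u}
        ((TwoSidedIdeal.span {a} : TwoSidedIdeal Λ)).ringCon.Quotient,
      pdLE.{u, w1} X n)
    -- `pd_Λ ⟨a⟩ < ∞`:
    (hpd : ∃ n : ℕ,
      pdLE.{u, w} (ModuleCat.of Λ (TwoSidedIdeal.span {a} : TwoSidedIdeal Λ).asIdeal) n) :
    -- `pd_Λ((Λ/⟨a⟩)/rad(Λ/⟨a⟩)) < ∞`:
    (∃ n : ℕ, ∀ S : ModuleCat.{u} Λ, IsSimpleModule Λ S →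
      (∀ s : S, a • s = 0) → pdLE.{u, w} S n) ∧
    -- `pd_{aΛa}(aΛ) < ∞`:
    (∃ n : ℕ, pdLE.{u, w2} (ModuleCat.of (Corner a) (CornerMod a Λ)) n) := by
  obtain ⟨m, hm⟩ := hgl
  obtain ⟨n, hn⟩ := hpd
  have hI := hasPDLT_of_pdLE hn
  have S := shortExact_idealOf a
  have hΛ : Projective (ModuleCat.of Λ Λ) := (IsProjective.iff_projective _).1 inferInstance
  constructor
  · have hB := (S.hasProjectiveDimensionLT_X₃_iff n hΛ).2 hI
    refine ⟨m + (n + 1), fun Y _ hY => pdLE_of_hasPDLT ?_⟩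
    obtain ⟨X, ⟨e⟩⟩ := exists_iso_restrictScalars a Y hY
    have := hasPDLT_restrictScalars (proj a) (n + 1) hB m X (hasPDLT_of_pdLE (hm X))
    exact hasProjectiveDimensionLT_of_iso e _
  · have horth : ExtOrthogonal.{u, w} a (idealOf a).asIdeal := by
      intro Y hY j x
      cases j with
      | zero => exact ext_zero_eq_zero (cornerTrace_idealOf a) Y hY x
      | succ j =>
        obtain ⟨X, ⟨e⟩⟩ := exists_iso_restrictScalars a Y hY
        have hBproj : Projective (ModuleCat.of (idealOf a).ringCon.Quotient
            (idealOf a).ringCon.Quotient) := (IsProjective.iff_projective _).1 inferInstance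
        -- `Ext^{j+2}_Λ(Λ/⟨a⟩, Y)` vanishes, being isomorphic to an `Ext` group over `Λ/⟨a⟩`.
        have hz (z : Ext ((ModuleCat.restrictScalars (proj a)).obj
            (ModuleCat.of _ (idealOf a).ringCon.Quotient)) Y (j + 1 + 1)) : z = 0 := by
          obtain ⟨E⟩ := hstrat (ModuleCat.of _ (idealOf a).ringCon.Quotient) X (j + 1 + 1)
          have h0 : z.comp (Ext.mk₀ e.inv) (add_zero _) = 0 :=
            E.symm.injective (by rw [map_zero]; exact Ext.eq_zero_of_projective _)
          have h1 := congrArg (fun t => t.comp (Ext.mk₀ e.hom) (add_zero _)) h0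
          simpa using h1
        obtain ⟨x', hx'⟩ := Ext.contravariant_sequence_exact₁ S Y x
          (add_comm 1 (j + 1)) (hz _)
        have hx0 : x' = 0 := Ext.eq_zero_of_projective (P := ModuleCat.of Λ Λ) x'
        rw [← hx', hx0, Ext.comp_zero]
    have := horth.hasPDLT_cornerMod a n _ hI
    exact ⟨n, pdLE_of_hasPDLT
      (hasProjectiveDimensionLT_of_iso (cornerModIdealEquiv a).toModuleIso (n + 1))⟩
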